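/- For every natural number k, the minimum, taken over all plays of the reversible pebble game on 2^k nodes that contain a configuration in which node 2^k is pebbled, of the maximum number of pebbled nodes occurring in any configuration of the play, is exactly k + 1. -/

import Mathlib

/- Bennett's reversible pebble game on `t` nodes numbered `1, …, t`.
A configuration is a finite set `P` of pebbled node indices (a subset of
`{1, …, t}`).  A legal move toggles the pebbled status of exactly one node
`j` with `1 ≤ j ≤ t`, provided `j = 1` or node `j - 1` is pebbled. -/
def PebbleMove (t : ℕ) (P P' : Finset ℕ) : Prop :=
  ∃ j : ℕ, 1 ≤ j ∧ j ≤ t ∧ (j = 1 ∨ j - 1 ∈ P) ∧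
    P' = (if j ∈ P then P.erase j else insert j P)

/-- A play is a finite sequence of configurations beginning with the empty
configuration, each consecutive pair related by a legal move. -/
def PebblePlay (t : ℕ) (L : List (Finset ℕ)) : Prop :=
  L.head? = some ∅ ∧ L.Chain' (PebbleMove t)

def PMv (a : ℕ) (P P' : Finset ℕ) : Prop :=
  ∃ j : ℕ, a < j ∧ (j = a + 1 ∨ j - 1 ∈ P) ∧ ∀ x, x ∈ P' ↔ ¬ (x ∈ P ↔ x = j)

def PSt (a n : ℕ) (P P' : Finset ℕ) : Prop :=
  P.card ≤ n ∧ P'.card ≤ n ∧ PMv a P P'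

theorem PSt.symm' {a n : ℕ} {P P' : Finset ℕ} (h : PSt a n P P') : PSt a n P' P := by
  obtain ⟨h1, h2, j, hj, hj', hx⟩ := h
  refine ⟨h2, h1, j, hj, ?_, ?_⟩
  · rcases hj' with h | h
    · exact Or.inl h
    · right
      rw [hx]
      have : j - 1 ≠ j := by omega
      tauto
  · intro x
    have := hx x
    tauto

abbrev PR (a n : ℕ) := Relation.ReflTransGen (PSt a n)

theorem PR.symm' {a n : ℕ} {P P' : Finset ℕ} (h : PR a n P P') : PR a n P' P := by
  induction h with
  | refl => exact .refl
  | tail _ h ih => exact Relation.ReflTransGen.head h.symm' ih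

theorem card_low_high (P : Finset ℕ) (b : ℕ) :
    (P.filter (· ≤ b)).card + (P.filter (b < ·)).card = P.card := by
  have := Finset.card_filter_add_card_filter_not (s := P) (fun x => x ≤ b)
  simpa using this

theorem pebble_lower (n : ℕ) : ∀ (a : ℕ) (P : Finset ℕ), PR a n ∅ P → ∀ x ∈ P, x < a + 2 ^ n := by
  induction n with
  | zero =>
    intro a P h x hx
    exfalso
    rcases Relation.ReflTransGen.cases_tail h with h | ⟨Q, _, h⟩
    · subst h; simp at hx
    · have := h.2.1
      simp at this
      simp [this] at hx
  | succ n ih =>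
    intro a P h
    have hm : 1 ≤ 2 ^ n := Nat.one_le_two_pow
    obtain ⟨b, hb⟩ : ∃ b, b = a + 2 ^ n := ⟨_, rfl⟩
    have inv : (∀ x ∈ P, x ≤ b) ∨ ((∃ Q : Finset ℕ, b ∈ Q ∧ PR a n Q (P.filter (· ≤ b))) ∧
        PR b n ∅ (P.filter (b < ·))) := by
      induction h with
      | refl => left; simp
      | @tail P P' _ hs I =>
        obtain ⟨hc, hc', j, hj, hj', hx⟩ := hs
        by_cases hh : ∀ x ∈ P', x ≤ b
        · exact Or.inl hh
        right
        have e1 := card_low_high P b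
        have e2 := card_low_high P' b
        have p2 : 0 < (P'.filter (b < ·)).card := by
          push Not at hh
          obtain ⟨x, hx1, hx2⟩ := hh
          exact Finset.card_pos.2 ⟨x, by simp [hx1, hx2]⟩
        by_cases hl : ∀ x ∈ P, x ≤ b
        · have hjb : j = b + 1 := by
            push Not at hh
            obtain ⟨x, hx1, hx2⟩ := hh
            have h3 := (hx x).1 hx1
            have h4 : x = j := by
              by_contra hne
              have := hl x
              grind
            rcases hj' with h5 | h5
            · omega
            · have := hl _ h5
              omega
          subst hjb
          have hbP : b ∈ P := by
            rcases hj' with h5 | h5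
            · omega
            · simpa using h5
          have hlow : P'.filter (· ≤ b) = P := by
            ext x
            have := hx x
            have := hl x
            grind
          have hhigh : P'.filter (b < ·) = {b + 1} := by
            ext x
            have := hx x
            have := hl x
            grind
          refine ⟨⟨P, hbP, ?_⟩, ?_⟩
          · rw [hlow]
          · have hP : 0 < P.card := Finset.card_pos.2 ⟨b, hbP⟩
            rw [hlow, hhigh] at e2
            rw [Finset.card_singleton] at e2
            rw [hhigh]
            refine .single ⟨by simp, by simp; omega, b + 1, by omega, Or.inl rfl, ?_⟩
            intro x; simp
        · have p1 : 0 < (P.filter (b < ·)).card := by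
            push Not at hl
            obtain ⟨x, hx1, hx2⟩ := hl
            exact Finset.card_pos.2 ⟨x, by simp [hx1, hx2]⟩
          rcases I with I | ⟨⟨Q, hQ, I1⟩, I2⟩
          · exact absurd I hl
          by_cases hjb : j ≤ b
          · have hhigh : P'.filter (b < ·) = P.filter (b < ·) := by
              ext x
              have := hx x
              grind
            refine ⟨⟨Q, hQ, I1.tail ⟨by omega, by omega, j, hj, ?_, ?_⟩⟩, ?_⟩
            · rcases hj' with h5 | h5
              · exact Or.inl h5
              · right; simp [h5]; omega
            · intro x
              have := hx x
              grind
            · rw [hhigh]; exact I2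
          · have hlow : P'.filter (· ≤ b) = P.filter (· ≤ b) := by
              ext x
              have := hx x
              grind
            have p3 : 0 < (P.filter (· ≤ b)).card := by
              rw [Finset.card_pos, Finset.nonempty_iff_ne_empty]
              intro h0
              rw [h0] at I1
              have := ih a Q I1.symm' b hQ
              omega
            rw [hlow] at e2
            refine ⟨⟨Q, hQ, by rw [hlow]; exact I1⟩, 
              I2.tail ⟨by omega, by omega, j, by omega, ?_, ?_⟩⟩
            · rcases hj' with h5 | h5
              · left; omega
              · by_cases h6 : j = b + 1
                · exact Or.inl h6
                · right; simp [h5]; omega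
            · intro x
              have := hx x
              grind
    intro x hx
    rw [pow_succ]
    rcases inv with h | ⟨_, h⟩
    · have := h x hx
      omega
    · by_cases hxb : x ≤ b
      · omega
      · have := ih b _ h x (by simp [hx]; omega)
        omega

def TSt (t m : ℕ) (P P' : Finset ℕ) : Prop :=
  P.card ≤ m ∧ P'.card ≤ m ∧ PebbleMove t P P'

theorem PebbleMove.toMv {t : ℕ} {P P' : Finset ℕ} (h : PebbleMove t P P') : PMv 0 P P' := by
  obtain ⟨j, h1, h2, h3, rfl⟩ := h
  refine ⟨j, h1, by simpa using h3, ?_⟩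
  intro x
  split_ifs <;> grind

theorem PebbleMove.symm' {t : ℕ} {P P' : Finset ℕ} (h : PebbleMove t P P') :
    PebbleMove t P' P := by
  obtain ⟨j, h1, h2, h3, rfl⟩ := h
  refine ⟨j, h1, h2, ?_, ?_⟩
  · rcases h3 with h3 | h3
    · exact Or.inl h3
    · right
      split_ifs <;> grind
  · split_ifs <;> grind

theorem TR.symm' {t m : ℕ} {P P' : Finset ℕ} (h : Relation.ReflTransGen (TSt t m) P P') :
    Relation.ReflTransGen (TSt t m) P' P := by
  induction h with
  | refl => exact .refl
  | tail _ h ih => exact Relation.ReflTransGen.head ⟨h.2.1, h.1, h.2.2.symm'⟩ ih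

theorem pebble_upper (t m k : ℕ) : ∀ (a : ℕ) (S : Finset ℕ), (∀ x ∈ S, x ≤ a ∨ a + 2 ^ k < x) →
    (a = 0 ∨ a ∈ S) → a + 2 ^ k ≤ t → S.card + k + 1 ≤ m →
    Relation.ReflTransGen (TSt t m) S (insert (a + 2 ^ k) S) := by
  induction k with
  | zero =>
    intro a S hS ha ht hm
    have hn : a + 2 ^ 0 ∉ S := by
      intro h; have := hS _ h; simp at this
    refine .single ⟨by omega, by rw [Finset.card_insert_of_notMem hn]; omega,
      a + 2 ^ 0, by simp, ht, ?_, by rw [if_neg hn]⟩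
    simpa using ha
  | succ k ih =>
    intro a S hS ha ht hm
    have hp : 1 ≤ 2 ^ k := Nat.one_le_two_pow
    have e : a + 2 ^ (k + 1) = a + 2 ^ k + 2 ^ k := by ring
    rw [e] at hS ht ⊢
    obtain ⟨q, hq⟩ : ∃ q, q = 2 ^ k := ⟨_, rfl⟩
    rw [← hq] at ih hS ht hp ⊢
    have c1 := Finset.card_insert_le (a + q) S
    have c2 := Finset.card_insert_le (a + q + q) S
    have s1 := ih a S (by intro x hx; have := hS x hx; omega) ha (by omega) (by omega)
    have s2 := ih (a + q) (insert (a + q) S)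
      (by
        intro x hx
        rcases Finset.mem_insert.1 hx with rfl | hx
        · simp
        · have := hS x hx; omega) (by simp) ht (by omega)
    have s3 := ih a (insert (a + q + q) S)
      (by
        intro x hx
        rcases Finset.mem_insert.1 hx with rfl | hx
        · omega
        · have := hS x hx; omega) (by simp; tauto) (by omega) (by omega)
    rw [Finset.insert_comm] at s3
    exact (s1.trans s2).trans (TR.symm' s3)

theorem exists_list_of_TR {t m : ℕ} {P P' : Finset ℕ} (hP' : P'.card ≤ m)
    (h : Relation.ReflTransGen (TSt t m) P P') :
    ∃ l : List (Finset ℕ), List.IsChain (PebbleMove t) (P :: l) ∧ P' ∈ P :: l ∧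
      ∀ Q ∈ P :: l, Q.card ≤ m := by
  induction h using Relation.ReflTransGen.head_induction_on with
  | refl => exact ⟨[], by simp, by simp, by simpa using hP'⟩
  | @head P Q hs _ ih =>
    obtain ⟨l, h1, h2, h3⟩ := ih
    refine ⟨Q :: l, List.isChain_cons_cons.2 ⟨hs.2.2, h1⟩, List.mem_cons_of_mem _ h2, ?_⟩
    intro X hX
    rcases List.mem_cons.1 hX with rfl | hX
    · exact hs.1
    · exact h3 X hX

theorem PR_of_list {t m : ℕ} : ∀ (l : List (Finset ℕ)) (P : Finset ℕ),
    List.IsChain (PebbleMove t) (P :: l) → (∀ Q ∈ P :: l, Q.card ≤ m) →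
    ∀ Q ∈ P :: l, PR 0 m P Q := by
  intro l
  induction l with
  | nil =>
    intro P _ _ Q hQ
    rw [List.mem_singleton.1 hQ]
  | cons A l ih =>
    intro P hc hm Q hQ
    rcases List.mem_cons.1 hQ with rfl | hQ
    · exact .refl
    · obtain ⟨h1, h2⟩ := List.isChain_cons_cons.1 hc
      exact Relation.ReflTransGen.head ⟨hm P (by simp), hm A (by simp), h1.toMv⟩
        (ih A h2 (fun X hX => hm X (List.mem_cons_of_mem _ hX)) Q hQ)

/-- The minimum, over all plays of the reversible pebble game on `2 ^ k` nodes
containing a configuration in which node `2 ^ k` is pebbled, of the maximum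
number of pebbled nodes in any configuration of the play, is exactly `k + 1`.
This is expressed as: `k + 1` is the least `m` such that some play pebbling
node `2 ^ k` keeps every configuration's cardinality at most `m`. -/
theorem pebble_game_optimal_pebbles (k : ℕ) :
    IsLeast {m : ℕ | ∃ L : List (Finset ℕ), PebblePlay (2 ^ k) L ∧
        (∃ P ∈ L, 2 ^ k ∈ P) ∧ ∀ P ∈ L, P.card ≤ m} (k + 1) := by
  constructor
  · have h := pebble_upper (2 ^ k) (k + 1) k 0 ∅ (by simp) (by simp) (by simp) (by simp)
    obtain ⟨l, h1, h2, h3⟩ := exists_list_of_TR (by simp) h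
    exact ⟨∅ :: l, ⟨rfl, h1⟩, ⟨_, h2, by simp⟩, h3⟩
  · rintro m ⟨L, ⟨hL, hc⟩, ⟨P, hP, hk⟩, hm⟩
    obtain _ | ⟨A, l⟩ := L
    · simp at hL
    · simp only [List.head?_cons, Option.some.injEq] at hL
      subst hL
      have h := pebble_lower m 0 P (PR_of_list l ∅ hc hm P hP) _ hk
      rw [zero_add] at h
      exact (Nat.pow_lt_pow_iff_right (by norm_num)).1 h
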